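/- arXiv:1902.01467 — 10 statements merged into one kernel-verified Lean document; each statement's English description precedes it below -/
import Mathlib

section
/- Let 𝔤 be a finite-dimensional simple real Lie algebra and let 𝔭 be a Lie subalgebra of 𝔤 whose polar 𝔭^⊥ with respect to the Killing form is an abelian Lie subalgebra of 𝔤 (i.e. 𝔭 is a height-one parabolic subalgebra). Then 𝔭^⊥ ⊆ 𝔭. -/
/-- Let `𝔤` be a finite-dimensional simple real Lie algebra and `𝔭` a Lie subalgebra whose
polar with respect to the Killing form is an abelian Lie subalgebra (i.e. `𝔭` is a
height-one parabolic subalgebra).  Then `𝔭^⊥ ⊆ 𝔭`. -/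
theorem polar_subset_of_heightOneParabolic
    (L : Type*) [LieRing L] [LieAlgebra ℝ L] [FiniteDimensional ℝ L]
    [LieAlgebra.IsSimple ℝ L] (p : LieSubalgebra ℝ L)
    (habel : ∀ x y : L,
      (∀ u ∈ p, killingForm ℝ L x u = 0) →
      (∀ u ∈ p, killingForm ℝ L y u = 0) → ⁅x, y⁆ = 0) :
    ∀ x : L, (∀ u ∈ p, killingForm ℝ L x u = 0) → x ∈ p := by
  have hsymm : ∀ a b : L, killingForm ℝ L a b = killingForm ℝ L b a :=
    fun a b => LieModule.traceForm_comm ℝ L L a b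
  have hinv : ∀ a b c : L, killingForm ℝ L ⁅a, b⁆ c = killingForm ℝ L a ⁅b, c⁆ :=
    fun a b c => LieModule.traceForm_apply_lie_apply ℝ L L a b c
  have hoo := LinearMap.BilinForm.orthogonal_orthogonal
    (LieAlgebra.IsKilling.killingForm_nondegenerate ℝ L)
    (LieModule.traceForm_isSymm ℝ L L).isRefl p.toSubmodule
  have hmem : ∀ z : L, (∀ y : L, (∀ u ∈ p, killingForm ℝ L y u = 0) →
      killingForm ℝ L z y = 0) → z ∈ p := by
    intro z hz
    change z ∈ p.toSubmodule
    rw [← hoo, LinearMap.BilinForm.mem_orthogonal_iff]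
    intro y hy
    rw [LinearMap.BilinForm.mem_orthogonal_iff] at hy
    change killingForm ℝ L y z = 0
    rw [hsymm]
    apply hz
    intro u hu
    rw [hsymm]
    exact hy u hu
  -- the polar brackets everything into `p`
  have h1 : ∀ x g : L, (∀ u ∈ p, killingForm ℝ L x u = 0) → ⁅x, g⁆ ∈ p := by
    intro x g hx
    apply hmem
    intro y hy
    rw [← lie_skew, map_neg, LinearMap.neg_apply, hinv, habel x y hx hy, map_zero, neg_zero]
  -- the polar brackets `p` into the polar
  have h2 : ∀ x g : L, (∀ u ∈ p, killingForm ℝ L x u = 0) → g ∈ p →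
      ∀ u ∈ p, killingForm ℝ L ⁅x, g⁆ u = 0 := by
    intro x g hx hg u hu
    rw [hinv]
    exact hx _ (p.lie_mem hg hu)
  intro x hx
  apply hmem
  intro y hy
  rw [killingForm_apply_apply]
  apply IsNilpotent.eq_zero
  apply LinearMap.isNilpotent_trace_of_isNilpotent
  refine ⟨2, ?_⟩
  ext g
  have h3 : ⁅y, ⁅x, ⁅y, g⁆⁆⁆ = 0 := habel _ _ hy (h2 _ _ hx (h1 y g hy))
  simp [pow_two, h3]
end

section
/- Let 𝔤 be a finite-dimensional real Lie algebra and let 𝔭 be a Lie subalgebra of 𝔤 whose polar 𝔭^⊥ with respect to the Killing form is an abelian Lie subalgebra. Then for every y ∈ 𝔭^⊥ and every z ∈ 𝔭 one has [y,[y,z]] = 0; that is, 𝔭 ⊆ Ker((ad_y)²). -/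
/-- Let `𝔤` be a finite-dimensional real Lie algebra and `𝔭` a Lie subalgebra whose polar
`𝔭^⊥` with respect to the Killing form is an abelian Lie subalgebra.  Then for every
`y ∈ 𝔭^⊥` and every `z ∈ 𝔭` one has `⁅y, ⁅y, z⁆⁆ = 0`, i.e. `𝔭 ⊆ Ker((ad y)²)`. -/
theorem subalgebra_subset_ker_ad_sq
    (L : Type*) [LieRing L] [LieAlgebra ℝ L] [FiniteDimensional ℝ L]
    (p : LieSubalgebra ℝ L)
    (habel : ∀ x y : L,
      (∀ u ∈ p, killingForm ℝ L x u = 0) →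
      (∀ u ∈ p, killingForm ℝ L y u = 0) → ⁅x, y⁆ = 0) :
    ∀ y : L, (∀ u ∈ p, killingForm ℝ L y u = 0) →
      ∀ z ∈ p, ⁅y, ⁅y, z⁆⁆ = 0 := by
  intro y hy z hz
  refine habel y ⁅y, z⁆ hy ?_
  intro u hu
  have h : killingForm ℝ L ⁅y, z⁆ u = killingForm ℝ L y ⁅z, u⁆ :=
    LieModule.traceForm_apply_lie_apply ℝ L L y z u
  rw [h]
  exact hy _ (p.lie_mem hz hu)
end

section
/- Let 𝔤 be a finite-dimensional simple real Lie algebra and let 𝔭, 𝔮 be Lie subalgebras of 𝔤, each with abelian polar with respect to the Killing form (height-one parabolic), and with dim 𝔭 = dim 𝔮. Suppose y ∈ 𝔤 satisfies y ∈ 𝔭^⊥, y ∈ 𝔮^⊥ and Ker((ad_y)²) = 𝔮. Then 𝔭 = 𝔮. (In particular, a vector y ∈ 𝔤 can satisfy the prevalence condition 'y ∈ 𝔭^⊥ and Ker((ad_y)²) = 𝔭' for at most one member 𝔭 of a conjugacy class of height-one parabolic subalgebras.) -/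
/-- In a finite-dimensional simple real Lie algebra, if `𝔭` and `𝔮` are Lie subalgebras with
abelian polars (height-one parabolic) of the same dimension, and `y ∈ 𝔭^⊥ ∩ 𝔮^⊥` satisfies
`Ker((ad y)²) = 𝔮`, then `𝔭 = 𝔮`; in particular a vector can be prevalent for at most one
member of a conjugacy class of height-one parabolic subalgebras. -/
theorem eq_of_prevalence
    (L : Type*) [LieRing L] [LieAlgebra ℝ L] [FiniteDimensional ℝ L]
    [LieAlgebra.IsSimple ℝ L] (p q : LieSubalgebra ℝ L)
    (habelp : ∀ x y : L,
      (∀ u ∈ p, killingForm ℝ L x u = 0) →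
      (∀ u ∈ p, killingForm ℝ L y u = 0) → ⁅x, y⁆ = 0)
    (habelq : ∀ x y : L,
      (∀ u ∈ q, killingForm ℝ L x u = 0) →
      (∀ u ∈ q, killingForm ℝ L y u = 0) → ⁅x, y⁆ = 0)
    (hdim : Module.finrank ℝ p = Module.finrank ℝ q)
    (y : L)
    (hyp : ∀ u ∈ p, killingForm ℝ L y u = 0)
    (hyq : ∀ u ∈ q, killingForm ℝ L y u = 0)
    (hker : LinearMap.ker ((LieAlgebra.ad ℝ L y) ^ 2) = (q : Submodule ℝ L)) :
    p = q := by
  have hle : p.toSubmodule ≤ q.toSubmodule := by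
    rw [← hker]
    intro u hu
    have h1 : ∀ v ∈ p, killingForm ℝ L ⁅y, u⁆ v = 0 := by
      intro v hv
      have h2 := LieModule.traceForm_apply_lie_apply ℝ L L y u v
      have h3 : killingForm ℝ L y ⁅u, v⁆ = 0 := hyp _ (p.lie_mem hu hv)
      exact h2.trans h3
    have h4 := habelp y ⁅y, u⁆ hyp h1
    rw [LinearMap.mem_ker, pow_two, Module.End.mul_apply, LieAlgebra.ad_apply,
      LieAlgebra.ad_apply]
    exact h4
  have heq : p.toSubmodule = q.toSubmodule := Submodule.eq_of_le_of_finrank_eq hle hdim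
  exact LieSubalgebra.toSubmodule_injective heq
end

section
/- Let 𝔤 be a finite-dimensional real Lie algebra and let 𝔮 be a Lie subalgebra of 𝔤 whose polar 𝔮^⊥ with respect to the Killing form is an abelian Lie subalgebra. Then for every z ∈ 𝔮^⊥ and every y ∈ 𝔤 one has [z,[z,y]] ∈ 𝔮^⊥; that is, the image of (ad_z)² is contained in 𝔮^⊥. -/
/-- Let `𝔤` be a finite-dimensional real Lie algebra and `𝔮` a Lie subalgebra whose polar
`𝔮^⊥` with respect to the Killing form is an abelian Lie subalgebra.  Then for every
`z ∈ 𝔮^⊥` and every `y ∈ 𝔤`, one has `⁅z, ⁅z, y⁆⁆ ∈ 𝔮^⊥`; i.e. the image of `(ad z)²` is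
contained in `𝔮^⊥`. -/
theorem ad_sq_image_subset_polar
    (L : Type*) [LieRing L] [LieAlgebra ℝ L] [FiniteDimensional ℝ L]
    (q : LieSubalgebra ℝ L)
    (habel : ∀ x y : L,
      (∀ u ∈ q, killingForm ℝ L x u = 0) →
      (∀ u ∈ q, killingForm ℝ L y u = 0) → ⁅x, y⁆ = 0) :
    ∀ z : L, (∀ u ∈ q, killingForm ℝ L z u = 0) →
      ∀ y : L, ∀ u ∈ q, killingForm ℝ L ⁅z, ⁅z, y⁆⁆ u = 0 := by
  intro z hz y u hu
  have key : ∀ a b c : L, killingForm ℝ L ⁅a, b⁆ c = killingForm ℝ L a ⁅b, c⁆ :=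
    fun a b c => LieModule.traceForm_apply_lie_apply ℝ L L a b c
  have h0 : ⁅z, ⁅z, u⁆⁆ = 0 := by
    apply habel z _ hz
    intro v hv
    rw [key]
    exact hz _ (q.lie_mem hu hv)
  have h1 : ⁅z, ⁅z, y⁆⁆ = ⁅⁅y, z⁆, z⁆ := by
    rw [← lie_skew ⁅y, z⁆ z, ← lie_skew z y, lie_neg]
  rw [h1, key, key, h0, map_zero]
end

section
/- Let 𝔤 be a finite-dimensional real Lie algebra and let 𝔮 be a Lie subalgebra of 𝔤 whose polar 𝔮^⊥ with respect to the Killing form is an abelian Lie subalgebra. Then for every z ∈ 𝔮^⊥ the linear endomorphism ad_z of 𝔤 satisfies (ad_z)³ = 0, i.e. [z,[z,[z,y]]] = 0 for all y ∈ 𝔤. -/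
/-- Let `𝔤` be a finite-dimensional real Lie algebra and `𝔮` a Lie subalgebra whose polar
`𝔮^⊥` with respect to the Killing form is an abelian Lie subalgebra.  Then for every
`z ∈ 𝔮^⊥` the endomorphism `ad z` satisfies `(ad z)³ = 0`, i.e. `⁅z, ⁅z, ⁅z, y⁆⁆⁆ = 0`
for all `y ∈ 𝔤`. -/
theorem ad_cube_eq_zero
    (L : Type*) [LieRing L] [LieAlgebra ℝ L] [FiniteDimensional ℝ L]
    (q : LieSubalgebra ℝ L)
    (habel : ∀ x y : L,
      (∀ u ∈ q, killingForm ℝ L x u = 0) →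
      (∀ u ∈ q, killingForm ℝ L y u = 0) → ⁅x, y⁆ = 0) :
    ∀ z : L, (∀ u ∈ q, killingForm ℝ L z u = 0) →
      (LieAlgebra.ad ℝ L z) ^ 3 = 0 ∧ ∀ y : L, ⁅z, ⁅z, ⁅z, y⁆⁆⁆ = 0 := by
  have symm : ∀ x y : L, killingForm ℝ L x y = killingForm ℝ L y x := fun x y =>
    LieModule.traceForm_comm ℝ L L x y
  have inv : ∀ x y w : L, killingForm ℝ L ⁅x, y⁆ w = killingForm ℝ L x ⁅y, w⁆ := fun x y w =>
    LieModule.traceForm_apply_lie_apply ℝ L L x y w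
  intro z hz
  have key : ∀ y : L, ⁅z, ⁅z, ⁅z, y⁆⁆⁆ = 0 := by
    intro y
    have hmem : killingForm ℝ L ⁅z, y⁆ ∈ q.toSubmodule.map (killingForm ℝ L) := by
      rw [← Subspace.dualCoannihilator_dualAnnihilator_eq (W := q.toSubmodule.map (killingForm ℝ L)),
        Submodule.mem_dualAnnihilator]
      intro w hw
      rw [Submodule.mem_dualCoannihilator] at hw
      have hw' : ∀ u ∈ q, killingForm ℝ L w u = 0 := fun u hu => by
        rw [symm]
        exact hw _ (Submodule.mem_map_of_mem hu)
      rw [symm, ← inv, habel w z hw' hz]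
      simp
    obtain ⟨u, hu, hux⟩ := hmem
    have hu : u ∈ q := hu
    have hn : ⁅z, ⁅z, y⁆ - u⁆ = 0 := by
      apply habel _ _ hz
      intro v _
      rw [map_sub, hux]
      simp
    rw [lie_sub, sub_eq_zero] at hn
    rw [hn]
    apply habel _ _ hz
    intro v hv
    rw [inv]
    exact hz _ (q.lie_mem hu hv)
  refine ⟨?_, key⟩
  ext y
  simpa [pow_succ] using key y
end

section
/- Let 𝔤 be a finite-dimensional real Lie algebra and let 𝔮 be a Lie subalgebra of 𝔤 whose polar 𝔮^⊥ with respect to the Killing form is an abelian Lie subalgebra. Then for every z ∈ 𝔮^⊥ and every y ∈ 𝔤, the exponential of the endomorphism ad_z satisfies exp(ad_z)(y) = y + [z,y] + (1/2)[z,[z,y]]. -/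
/-- The exponential of a nilpotent element of a real algebra: since `a ^ i = 0` for all
`i ≥ nilpotencyClass a`, the exponential series reduces to the finite sum
`∑_{i < nilpotencyClass a} a ^ i / i!`. -/
noncomputable def expNilpotent {A : Type*} [Ring A] [Algebra ℝ A] (a : A) : A :=
  ∑ i ∈ Finset.range (nilpotencyClass a), (i.factorial : ℝ)⁻¹ • a ^ i

/-- Let `𝔤` be a finite-dimensional real Lie algebra and `𝔮` a Lie subalgebra whose polar
`𝔮^⊥` with respect to the Killing form is an abelian Lie subalgebra.  Then for every
`z ∈ 𝔮^⊥` and every `y ∈ 𝔤`, the exponential of the endomorphism `ad z` satisfies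
`exp (ad z) y = y + ⁅z, y⁆ + (1/2) ⁅z, ⁅z, y⁆⁆`. -/
theorem exp_ad_apply
    (L : Type*) [LieRing L] [LieAlgebra ℝ L] [FiniteDimensional ℝ L]
    (q : LieSubalgebra ℝ L)
    (habel : ∀ x y : L,
      (∀ u ∈ q, killingForm ℝ L x u = 0) →
      (∀ u ∈ q, killingForm ℝ L y u = 0) → ⁅x, y⁆ = 0) :
    ∀ z : L, (∀ u ∈ q, killingForm ℝ L z u = 0) →
      ∀ y : L,
        expNilpotent (LieAlgebra.ad ℝ L z) y
          = y + ⁅z, y⁆ + (1 / 2 : ℝ) • ⁅z, ⁅z, y⁆⁆ := by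
  intro z hz y
  have hB : ∀ a b c : L, killingForm ℝ L ⁅a, b⁆ c = killingForm ℝ L a ⁅b, c⁆ := fun a b c =>
    LieModule.traceForm_apply_lie_apply ℝ L L a b c
  have hS : ∀ a b : L, killingForm ℝ L a b = killingForm ℝ L b a := fun a b =>
    LieModule.traceForm_comm ℝ L L a b
  -- double orthogonal
  have key : ∀ x : L, (∀ w : L, (∀ u ∈ q, killingForm ℝ L w u = 0) → killingForm ℝ L x w = 0) →
      ∃ u ∈ q, killingForm ℝ L x = killingForm ℝ L u := by
    intro x hx
    let Φ : Submodule ℝ (Module.Dual ℝ L) := q.toSubmodule.map (killingForm ℝ L)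
    have h1 : killingForm ℝ L x ∈ Φ.dualCoannihilator.dualAnnihilator := by
      rw [Submodule.mem_dualAnnihilator]
      intro w hw
      apply hx
      intro u hu
      rw [Submodule.mem_dualCoannihilator] at hw
      rw [hS]
      exact hw _ (Submodule.mem_map_of_mem hu)
    rw [Subspace.dualCoannihilator_dualAnnihilator_eq] at h1
    obtain ⟨u, hu, h⟩ := h1
    exact ⟨u, hu, h.symm⟩
  have h3 : ∀ v : L, ⁅z, ⁅z, ⁅z, v⁆⁆⁆ = 0 := by
    intro v
    obtain ⟨u, hu, h⟩ := key ⁅z, v⁆ (by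
      intro w hw
      rw [hS, ← hB, habel w z hw hz]
      simp)
    have hk : ⁅z, ⁅z, v⁆ - u⁆ = 0 := by
      apply habel _ _ hz
      intro t _
      rw [map_sub, h, sub_self]
      rfl
    have h4 : ⁅z, ⁅z, v⁆⁆ = ⁅z, u⁆ := by
      rwa [lie_sub, sub_eq_zero] at hk
    rw [h4]
    apply habel _ _ hz
    intro t ht
    rw [hB]
    exact hz _ (q.lie_mem hu ht)
  have hp : (LieAlgebra.ad ℝ L z) ^ 3 = 0 := by
    ext v
    simpa [pow_succ] using h3 v
  have hle : nilpotencyClass (LieAlgebra.ad ℝ L z) ≤ 3 := by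
    exact Nat.sInf_le hp
  have hn : IsNilpotent (LieAlgebra.ad ℝ L z) := ⟨3, hp⟩
  have hsum : expNilpotent (LieAlgebra.ad ℝ L z) =
      ∑ i ∈ Finset.range 3, (i.factorial : ℝ)⁻¹ • (LieAlgebra.ad ℝ L z) ^ i := by
    unfold expNilpotent
    apply Finset.sum_subset
    · exact Finset.range_subset_range.2 hle
    · intro i _ hi
      rw [pow_eq_zero_of_le (by simpa using hi) (pow_nilpotencyClass hn), smul_zero]
  rw [hsum]
  simp [Finset.sum_range_succ, pow_succ, Nat.factorial]
end

section
/- Let V be a real vector space of dimension 2n, ε ∈ {1,−1}, and f : V × V → ℝ a nondegenerate bilinear form with f(x,y) = ε f(y,x). Let P, Q be totally isotropic subspaces of dimension n with V = P ⊕ Q, let u₁,…,uₙ be a basis of P and v₁,…,vₙ a basis of Q with f(uᵢ,vⱼ) = δᵢⱼ, and let J : V → V be the linear map determined by J(uᵢ) = vᵢ and J(vᵢ) = ε·uᵢ for all i. Then J² = ε·id, f(J(x),J(y)) = f(x,y) for all x,y ∈ V, and the bilinear form D(x,y) = f(J(x),y) is symmetric and definite; more precisely ε·D is positive definite. -/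
/-- Let `f` be a nondegenerate `ε`-symmetric bilinear form (`ε = ±1`) on a real vector space
`V` of dimension `2n`, let `P, Q` be complementary `n`-dimensional totally isotropic
subspaces, `u`, `v` dual bases of `P`, `Q` with respect to `f`, and let `J` be the linear map
with `J uᵢ = vᵢ`, `J vᵢ = ε uᵢ`.  Then `J² = ε id`, `J` preserves `f`, and the bilinear form
`D(x,y) = f(Jx, y)` is symmetric and definite; more precisely `ε • D` is positive definite
(so `J` is compactly adapted to `f`). -/
theorem compactly_adapted_J
    (n : ℕ) (V : Type*) [AddCommGroup V] [Module ℝ V] [FiniteDimensional ℝ V]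
    (hdim : Module.finrank ℝ V = 2 * n)
    (ε : ℝ) (hε : ε = 1 ∨ ε = -1)
    (f : V →ₗ[ℝ] V →ₗ[ℝ] ℝ)
    (hnd : ∀ x : V, (∀ y : V, f x y = 0) → x = 0)
    (hsym : ∀ x y : V, f x y = ε * f y x)
    (P Q : Submodule ℝ V)
    (hP : ∀ x ∈ P, ∀ y ∈ P, f x y = 0)
    (hQ : ∀ x ∈ Q, ∀ y ∈ Q, f x y = 0)
    (hPn : Module.finrank ℝ P = n) (hQn : Module.finrank ℝ Q = n)
    (hcompl : IsCompl P Q)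
    (u : Module.Basis (Fin n) ℝ P) (v : Module.Basis (Fin n) ℝ Q)
    (hdual : ∀ i j : Fin n, f (u i : V) (v j : V) = if i = j then 1 else 0)
    (J : V →ₗ[ℝ] V)
    (hJu : ∀ i : Fin n, J (u i : V) = (v i : V))
    (hJv : ∀ i : Fin n, J (v i : V) = ε • (u i : V)) :
    (∀ x : V, J (J x) = ε • x) ∧
    (∀ x y : V, f (J x) (J y) = f x y) ∧
    (∀ x y : V, f (J x) y = f (J y) x) ∧
    (∀ x : V, x ≠ 0 → 0 < ε * f (J x) x) := by
  have hεε : ε * ε = 1 := by rcases hε with h | h <;> simp [h]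
  have hex : ∀ x : V, ∃ a b : Fin n → ℝ,
      x = ∑ i, a i • (u i : V) + ∑ i, b i • (v i : V) := by
    intro x
    have hx : x ∈ P ⊔ Q := by rw [hcompl.sup_eq_top]; trivial
    obtain ⟨p, hp, q, hq, rfl⟩ := Submodule.mem_sup.1 hx
    refine ⟨fun i => u.repr ⟨p, hp⟩ i, fun i => v.repr ⟨q, hq⟩ i, ?_⟩
    have h1 := congrArg (Subtype.val) (u.sum_repr ⟨p, hp⟩)
    have h2 := congrArg (Subtype.val) (v.sum_repr ⟨q, hq⟩)
    simp only [Submodule.coe_sum, Submodule.coe_smul] at h1 h2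
    rw [h1, h2]
  have hJ : ∀ a b : Fin n → ℝ, J (∑ i, a i • (u i : V) + ∑ i, b i • (v i : V))
      = ∑ i, (ε * b i) • (u i : V) + ∑ i, a i • (v i : V) := by
    intro a b
    simp only [map_add, map_sum, map_smul, hJu, hJv, smul_smul]
    rw [add_comm]
    simp only [mul_comm]
  have huu : ∀ i j, f (u i : V) (u j : V) = 0 := fun i j => hP _ (u i).2 _ (u j).2
  have hvv : ∀ i j, f (v i : V) (v j : V) = 0 := fun i j => hQ _ (v i).2 _ (v j).2
  have hvu : ∀ i j, f (v i : V) (u j : V) = if j = i then ε else 0 := by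
    intro i j
    rw [hsym, hdual]; simp
  have hf : ∀ a b c d : Fin n → ℝ, f (∑ i, a i • (u i : V) + ∑ i, b i • (v i : V))
      (∑ i, c i • (u i : V) + ∑ i, d i • (v i : V)) = ∑ i, (a i * d i + ε * (b i * c i)) := by
    intro a b c d
    simp only [map_add, map_sum, map_smul, LinearMap.add_apply, LinearMap.sum_apply,
      LinearMap.smul_apply, huu, hvv, hvu, hdual, smul_eq_mul, mul_zero, Finset.sum_const_zero,
      mul_ite, Finset.sum_ite_eq, Finset.sum_ite_eq', Finset.mem_univ, if_true, zero_add, add_zero,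
      ← Finset.sum_add_distrib]
    refine Finset.sum_congr rfl fun i _ => ?_
    ring
  refine ⟨?_, ?_, ?_, ?_⟩
  · intro x
    obtain ⟨a, b, rfl⟩ := hex x
    rw [hJ, hJ]
    simp only [smul_add, Finset.smul_sum, smul_smul]
  · intro x y
    obtain ⟨a, b, rfl⟩ := hex x
    obtain ⟨c, d, rfl⟩ := hex y
    rw [hJ, hJ, hf, hf]
    refine Finset.sum_congr rfl fun i _ => ?_
    linear_combination (a i * d i) * hεε
  · intro x y
    obtain ⟨a, b, rfl⟩ := hex x
    obtain ⟨c, d, rfl⟩ := hex y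
    rw [hJ, hJ, hf, hf]
    refine Finset.sum_congr rfl fun i _ => ?_
    ring
  · intro x hx
    obtain ⟨a, b, rfl⟩ := hex x
    rw [hJ, hf, Finset.mul_sum]
    have he : ∀ i, ε * (ε * b i * b i + ε * (a i * a i)) = b i * b i + a i * a i := by
      intro i
      linear_combination (b i * b i + a i * a i) * hεε
    simp only [he]
    have hnn : ∀ i ∈ Finset.univ, 0 ≤ b i * b i + a i * a i := fun i _ =>
      add_nonneg (mul_self_nonneg _) (mul_self_nonneg _)
    refine lt_of_le_of_ne (Finset.sum_nonneg hnn) fun h0 => hx ?_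
    have h1 := (Finset.sum_eq_zero_iff_of_nonneg hnn).1 h0.symm
    have ha : ∀ i, a i = 0 := fun i => by
      have := h1 i (Finset.mem_univ i)
      nlinarith [mul_self_nonneg (a i), mul_self_nonneg (b i)]
    have hb : ∀ i, b i = 0 := fun i => by
      have := h1 i (Finset.mem_univ i)
      nlinarith [mul_self_nonneg (a i), mul_self_nonneg (b i)]
    simp [ha, hb]
end

section
/- Let N ≥ 3 and let X ∈ ℂ^N be a nonzero null vector (⟨X,X⟩ = 0 for the standard symmetric bilinear form). Let 𝔭_X = {T ∈ 𝔰𝔬(N,ℂ) : T(X) ∈ ℂX} (the stabilizer of the line ℂX). Then the orthogonal complement of 𝔭_X with respect to the Killing form of the complex Lie algebra 𝔰𝔬(N,ℂ) is exactly 𝔮_X = {T ∈ 𝔰𝔬(N,ℂ) : T(X) = 0 and T(X^⊥) ⊆ ℂX}. -/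
open Matrix
attribute [local instance 100] LieRing.ofAssociativeRing
/-- The complex Lie algebra `𝔰𝔬(N, ℂ)` of skew-symmetric `N × N` complex matrices,
with bracket `⁅S, T⁆ = S * T - T * S`. -/
def soC (N : ℕ) : LieSubalgebra ℂ (Matrix (Fin N) (Fin N) ℂ) where
  carrier := {T | Tᵀ = -T}
  add_mem' := by
    intro a b ha hb
    simp only [Set.mem_setOf_eq] at *
    simp [Matrix.transpose_add, ha, hb, neg_add]
    abel
  zero_mem' := by simp
  smul_mem' := by
    intro c x hx
    simp only [Set.mem_setOf_eq] at *
    simp [Matrix.transpose_smul, hx]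
  lie_mem' := by
    intro x y hx hy
    simp only [Set.mem_setOf_eq] at *
    show ⁅x, y⁆ᵀ = -⁅x, y⁆
    rw [Ring.lie_def]
    simp only [Matrix.transpose_sub, Matrix.transpose_mul, hx, hy, Matrix.neg_mul,
      Matrix.mul_neg, neg_neg, neg_sub]

theorem soC_mem {N : ℕ} (T : soC N) : (T : Matrix (Fin N) (Fin N) ℂ)ᵀ = -T := T.2

noncomputable def soProj (N : ℕ) : Matrix (Fin N) (Fin N) ℂ →ₗ[ℂ] soC N where
  toFun M := ⟨(1/2 : ℂ) • (M - Mᵀ), by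
    change ((1/2 : ℂ) • (M - Mᵀ))ᵀ = -((1/2 : ℂ) • (M - Mᵀ))
    rw [transpose_smul, transpose_sub, transpose_transpose, ← smul_neg, neg_sub]⟩
  map_add' A B := by
    apply Subtype.ext
    change (1/2 : ℂ) • (A + B - (A + B)ᵀ) = (1/2 : ℂ) • (A - Aᵀ) + (1/2 : ℂ) • (B - Bᵀ)
    rw [transpose_add, ← smul_add]; congr 1; abel
  map_smul' c A := by
    apply Subtype.ext
    change (1/2 : ℂ) • (c • A - (c • A)ᵀ) = c • ((1/2 : ℂ) • (A - Aᵀ))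
    rw [transpose_smul, ← smul_sub, smul_comm]

theorem soProj_coe {N : ℕ} (T : soC N) : soProj N (T : Matrix (Fin N) (Fin N) ℂ) = T := by
  apply Subtype.ext
  change (1/2 : ℂ) • ((T : Matrix (Fin N) (Fin N) ℂ) - (T : Matrix (Fin N) (Fin N) ℂ)ᵀ) = T
  rw [soC_mem, sub_neg_eq_add, ← two_smul ℂ, smul_smul]; norm_num

theorem trace_matEnd {N : ℕ} (f : Matrix (Fin N) (Fin N) ℂ →ₗ[ℂ] Matrix (Fin N) (Fin N) ℂ) :
    LinearMap.trace ℂ _ f = ∑ i, ∑ j, f (single i j 1) i j := by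
  rw [LinearMap.trace_eq_matrix_trace ℂ (Matrix.stdBasis ℂ (Fin N) (Fin N)), Matrix.trace,
    Fintype.sum_prod_type]
  refine Finset.sum_congr rfl fun i _ => Finset.sum_congr rfl fun j _ => ?_
  rw [Matrix.diag_apply, LinearMap.toMatrix_apply, Matrix.stdBasis_eq_single]
  rfl

theorem sum_sandwich {N : ℕ} (A B : Matrix (Fin N) (Fin N) ℂ) :
    ∑ i, ∑ j, (A * single i j (1:ℂ) * B : Matrix (Fin N) (Fin N) ℂ) i j = A.trace * B.trace := by
  simp [Matrix.trace, Finset.sum_mul_sum, Matrix.mul_apply, Matrix.single_apply, ite_and]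

theorem sum_sandwich' {N : ℕ} (A B : Matrix (Fin N) (Fin N) ℂ) :
    ∑ i, ∑ j, (A * single j i (1:ℂ) * B : Matrix (Fin N) (Fin N) ℂ) i j = (A * Bᵀ).trace := by
  simp [Matrix.trace, Matrix.mul_apply, Matrix.single_apply, ite_and]

theorem killing_soC {N : ℕ} (S T : soC N) : killingForm ℂ (soC N) S T =
    ((N : ℂ) - 2) * ((S : Matrix (Fin N) (Fin N) ℂ) * (T : Matrix (Fin N) (Fin N) ℂ)).trace := by
  rw [killingForm_apply_apply]
  set f : soC N →ₗ[ℂ] soC N := LieAlgebra.ad ℂ (soC N) S ∘ₗ LieAlgebra.ad ℂ (soC N) T with hf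
  let ι : soC N →ₗ[ℂ] Matrix (Fin N) (Fin N) ℂ := (soC N).toSubmodule.subtype
  have h1 : f = (f ∘ₗ soProj N) ∘ₗ ι := by
    ext1 x
    exact (congrArg f (soProj_coe x)).symm
  have h2 : LinearMap.trace ℂ _ f = LinearMap.trace ℂ _ (ι ∘ₗ (f ∘ₗ soProj N)) := by
    conv_lhs => rw [h1]
    rw [LinearMap.trace_comp_comm']
  rw [h2, trace_matEnd]
  have hS := soC_mem S
  have hT := soC_mem T
  have h3 : ∀ M, (ι ∘ₗ (f ∘ₗ soProj N)) M =
      ⁅(S : Matrix (Fin N) (Fin N) ℂ), ⁅(T : Matrix (Fin N) (Fin N) ℂ), (1/2 : ℂ) • (M - Mᵀ)⁆⁆ :=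
    fun M => rfl
  generalize (S : Matrix (Fin N) (Fin N) ℂ) = s at *
  generalize (T : Matrix (Fin N) (Fin N) ℂ) = t at *
  have h4 : ∀ i j, (ι ∘ₗ (f ∘ₗ soProj N)) (single i j 1) i j = (1/2 : ℂ) *
      (((s * t) * single i j 1 * 1 : Matrix (Fin N) (Fin N) ℂ) i j - ((s * t) * single j i 1 * 1 : Matrix (Fin N) (Fin N) ℂ) i j
       - (s * single i j 1 * t : Matrix (Fin N) (Fin N) ℂ) i j + (s * single j i 1 * t : Matrix (Fin N) (Fin N) ℂ) i j
       - (t * single i j 1 * s : Matrix (Fin N) (Fin N) ℂ) i j + (t * single j i 1 * s : Matrix (Fin N) (Fin N) ℂ) i j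
       + (1 * single i j 1 * (t * s) : Matrix (Fin N) (Fin N) ℂ) i j - (1 * single j i 1 * (t * s) : Matrix (Fin N) (Fin N) ℂ) i j) := by
    intro i j
    rw [h3, transpose_single]
    generalize single i j (1:ℂ) = a
    generalize single j i (1:ℂ) = b
    have : ⁅s, ⁅t, (1/2 : ℂ) • (a - b)⁆⁆ = (1/2 : ℂ) • ((s * t) * a * 1 - (s * t) * b * 1
      - s * a * t + s * b * t - t * a * s + t * b * s + 1 * a * (t * s) - 1 * b * (t * s)) := by
      simp only [Ring.lie_def, Matrix.mul_smul, Matrix.smul_mul, ← smul_sub]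
      congr 1
      noncomm_ring
    rw [this]; rfl
  simp only [h4, ← Finset.mul_sum, Finset.sum_add_distrib, Finset.sum_sub_distrib,
    sum_sandwich, sum_sandwich']
  have h5 : s.trace = 0 := by
    have := congrArg trace hS
    rw [trace_transpose, trace_neg] at this
    linear_combination this / 2
  have h6 : (t * s)ᵀ = s * t := by rw [transpose_mul, hS, hT, neg_mul_neg]
  rw [h6, h5, hT, hS, Matrix.trace_mul_comm t s]
  simp only [transpose_one, Matrix.mul_one, Matrix.one_mul, Matrix.mul_neg, trace_neg, trace_one,
    Matrix.trace_mul_comm t s, Fintype.card_fin]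
  ring

theorem wedge_mem {N : ℕ} (u v : Fin N → ℂ) : vecMulVec u v - vecMulVec v u ∈ soC N := by
  change (vecMulVec u v - vecMulVec v u)ᵀ = -(vecMulVec u v - vecMulVec v u)
  rw [transpose_sub, transpose_vecMulVec, transpose_vecMulVec, neg_sub]

theorem skew_dot {N : ℕ} {t : Matrix (Fin N) (Fin N) ℂ} (ht : tᵀ = -t) (u v : Fin N → ℂ) :
    v ⬝ᵥ (t *ᵥ u) = - (u ⬝ᵥ (t *ᵥ v)) := by
  rw [dotProduct_mulVec, ← mulVec_transpose, ht, neg_mulVec, neg_dotProduct, dotProduct_comm]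

theorem trace_wedge {N : ℕ} {t : Matrix (Fin N) (Fin N) ℂ} (ht : tᵀ = -t) (u v : Fin N → ℂ) :
    (t * (vecMulVec u v - vecMulVec v u)).trace = 2 * (v ⬝ᵥ (t *ᵥ u)) := by
  rw [Matrix.mul_sub, mul_vecMulVec, mul_vecMulVec, trace_sub, trace_vecMulVec, trace_vecMulVec,
    dotProduct_comm, dotProduct_comm _ u, skew_dot ht v u]
  ring

/-- For `N ≥ 3` and a nonzero null vector `X ∈ ℂ^N`, the orthogonal complement, with respect
to the Killing form of `𝔰𝔬(N, ℂ)`, of the parabolic subalgebra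
`𝔭_X = {T ∈ 𝔰𝔬(N,ℂ) : T X ∈ ℂ X}` is exactly
`𝔮_X = {T ∈ 𝔰𝔬(N,ℂ) : T X = 0 and T (X^⊥) ⊆ ℂ X}`. -/
theorem killing_polar_of_pX
    (N : ℕ) (hN : 3 ≤ N) (X : Fin N → ℂ) (hX0 : X ≠ 0)
    (hnull : dotProduct X X = 0) :
    ∀ T : soC N,
      ((∀ S : soC N, (∃ c : ℂ, (S : Matrix (Fin N) (Fin N) ℂ).mulVec X = c • X) →
          killingForm ℂ (soC N) T S = 0)
        ↔ ((T : Matrix (Fin N) (Fin N) ℂ).mulVec X = 0 ∧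
            ∀ w : Fin N → ℂ, dotProduct X w = 0 →
              ∃ c : ℂ, (T : Matrix (Fin N) (Fin N) ℂ).mulVec w = c • X)) := by
  intro T
  obtain ⟨k, hk⟩ := Function.ne_iff.mp hX0
  simp only [Pi.zero_apply] at hk
  obtain ⟨Y, hY⟩ : ∃ Y : Fin N → ℂ, X ⬝ᵥ Y = 1 :=
    ⟨Pi.single k (X k)⁻¹, by rw [dotProduct_single, mul_inv_cancel₀ hk]⟩
  have hN2 : (N : ℂ) - 2 ≠ 0 := by
    intro h
    have : (N : ℂ) = (2 : ℕ) := by push_cast; linear_combination h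
    have := Nat.cast_injective this
    omega
  have hT := soC_mem T
  constructor
  · intro h
    have key : ∀ u v : Fin N → ℂ, (∃ c : ℂ, (v ⬝ᵥ X) • u - (u ⬝ᵥ X) • v = c • X) →
        v ⬝ᵥ ((T : Matrix (Fin N) (Fin N) ℂ) *ᵥ u) = 0 := by
      rintro u v ⟨c, hc⟩
      have h1 := h ⟨_, wedge_mem u v⟩ ⟨c, by
        rw [← hc]
        simp [sub_mulVec, vecMulVec_mulVec]⟩
      rw [killing_soC, trace_wedge hT] at h1
      simpa [hN2] using h1
    constructor
    · ext j
      have := key X (Pi.single j 1) ⟨Pi.single j 1 ⬝ᵥ X, by rw [hnull, zero_smul, sub_zero]⟩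
      simpa using this
    · intro w hw
      refine ⟨Y ⬝ᵥ ((T : Matrix (Fin N) (Fin N) ℂ) *ᵥ w), ?_⟩
      ext j
      have := key w (Pi.single j 1 - X j • Y) ⟨0, by
        rw [dotProduct_comm w, hw, sub_dotProduct, smul_dotProduct, dotProduct_comm Y, hY]
        simp⟩
      rw [sub_dotProduct, smul_dotProduct, single_dotProduct] at this
      simp only [Pi.smul_apply, smul_eq_mul] at this ⊢
      linear_combination this
  · rintro ⟨h0, h⟩ S ⟨l, hl⟩
    rw [killing_soC]
    have hS := soC_mem S
    generalize (S : Matrix (Fin N) (Fin N) ℂ) = s at *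
    generalize (T : Matrix (Fin N) (Fin N) ℂ) = t at *
    have h1 : ∀ j, ∃ c : ℂ, t *ᵥ (Pi.single j 1 - X j • Y) = c • X := fun j =>
      h _ (by rw [dotProduct_sub, dotProduct_smul, hY]; simp)
    choose c hc using h1
    have ht : t = vecMulVec (t *ᵥ Y) X + vecMulVec X c := by
      ext i j
      have := congrFun (hc j) i
      rw [mulVec_sub, mulVec_smul] at this
      simp only [Pi.sub_apply, Pi.smul_apply, smul_eq_mul, mulVec_single_one, col_apply] at this
      simp only [Matrix.add_apply, vecMulVec_apply]
      linear_combination this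
    have hcX : c ⬝ᵥ X = 0 := by
      have h2 := h0
      rw [ht, add_mulVec, vecMulVec_mulVec, vecMulVec_mulVec, hnull] at h2
      have := congrFun h2 k
      simpa [hk] using this
    have hXY : X ⬝ᵥ (t *ᵥ Y) = 0 := by rw [skew_dot hT, h0]; simp
    have : (s * t).trace = 0 := by
      rw [ht, Matrix.mul_add, mul_vecMulVec, mul_vecMulVec, trace_add, trace_vecMulVec,
        trace_vecMulVec, hl, smul_dotProduct, dotProduct_comm X, hcX, dotProduct_comm,
        skew_dot hS, hl, dotProduct_smul, dotProduct_comm, hXY]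
      simp
    rw [Matrix.trace_mul_comm, this, mul_zero]
end

section
/- Let N > 3 and let X, Y ∈ ℂ^N be nonzero null vectors. Then ⟨X,Y⟩ ≠ 0 if and only if 𝔮_X ∩ 𝔮_Y = {0}, where 𝔮_Z = {T ∈ 𝔰𝔬(N,ℂ) : T(Z) = 0 and T(Z^⊥) ⊆ ℂZ}. (This says the corresponding parabolic subalgebras are opposite exactly when ⟨X,Y⟩ ≠ 0.) -/
open Matrix

/-- `𝔮_Z = {T ∈ 𝔰𝔬(N,ℂ) : T Z = 0 and T (Z^⊥) ⊆ ℂ Z}`, as a set of matrices. -/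
def qSet (N : ℕ) (Z : Fin N → ℂ) : Set (Matrix (Fin N) (Fin N) ℂ) :=
  {T | Tᵀ = -T ∧ T.mulVec Z = 0 ∧
    ∀ w : Fin N → ℂ, dotProduct Z w = 0 → ∃ c : ℂ, T.mulVec w = c • Z}

theorem wedge_mem_s12 (N : ℕ) (Z u : Fin N → ℂ) (hZ : dotProduct Z Z = 0) (h : dotProduct u Z = 0) :
    vecMulVec Z u - vecMulVec u Z ∈ qSet N Z := by
  refine ⟨?_, ?_, ?_⟩
  · ext i j
    simp [vecMulVec_apply]
    ring
  · ext i
    simp [sub_mulVec, vecMulVec_mulVec, h, hZ]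
  · intro w hw
    refine ⟨dotProduct u w, ?_⟩
    ext i
    simp [sub_mulVec, vecMulVec_mulVec, hw]
    try ring

theorem smul_of_wedge (N : ℕ) (Z u : Fin N → ℂ) (hZ : Z ≠ 0)
    (h : vecMulVec Z u - vecMulVec u Z = 0) : ∃ c : ℂ, u = c • Z := by
  obtain ⟨i, hi⟩ := Function.ne_iff.mp hZ
  have hi' : Z i ≠ 0 := hi
  refine ⟨u i / Z i, ?_⟩
  ext j
  have := congrFun (congrFun h i) j
  simp [vecMulVec_apply] at this
  simp only [Pi.smul_apply, smul_eq_mul]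
  field_simp
  linear_combination this

theorem exists_orth (N : ℕ) (hN : 3 < N) (Z : Fin N → ℂ) :
    ∃ u : Fin N → ℂ, dotProduct Z u = 0 ∧ ¬ ∃ c : ℂ, u = c • Z := by
  by_contra! hc
  let f : (Fin N → ℂ) →ₗ[ℂ] ℂ := dotProductBilin ℂ ℂ Z
  have h1 : LinearMap.ker f ≤ Submodule.span ℂ {Z} := by
    intro u hu
    obtain ⟨c, h⟩ := hc u hu
    exact Submodule.mem_span_singleton.mpr ⟨c, h.symm⟩
  have h2 := Submodule.finrank_mono h1
  have h3 : Module.finrank ℂ (Submodule.span ℂ {Z}) ≤ 1 := by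
    simpa using finrank_span_le_card (R := ℂ) ({Z} : Set (Fin N → ℂ))
  have h4 := f.finrank_range_add_finrank_ker
  have h5 := Submodule.finrank_le (LinearMap.range f)
  simp at h4 h5
  omega

/-- For `N > 3` and nonzero null vectors `X, Y ∈ ℂ^N`, one has `⟨X, Y⟩ ≠ 0` if and only if
`𝔮_X ∩ 𝔮_Y = {0}`; that is, the parabolic subalgebras corresponding to `X` and `Y` are
opposite exactly when `⟨X, Y⟩ ≠ 0`. -/
theorem opposite_iff_dotProduct_ne_zero
    (N : ℕ) (hN : 3 < N) (X Y : Fin N → ℂ) (hX0 : X ≠ 0) (hY0 : Y ≠ 0)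
    (hXnull : dotProduct X X = 0) (hYnull : dotProduct Y Y = 0) :
    dotProduct X Y ≠ 0 ↔
      ∀ T : Matrix (Fin N) (Fin N) ℂ, T ∈ qSet N X → T ∈ qSet N Y → T = 0 := by
  constructor
  · rintro ha T ⟨-, hTX, hX⟩ ⟨-, hTY, hY⟩
    have ha' : dotProduct Y X ≠ 0 := by rwa [dotProduct_comm]
    have key : ∀ v, T.mulVec v = 0 := by
      intro v
      set w := v - (dotProduct Y v / dotProduct X Y) • X - (dotProduct X v / dotProduct X Y) • Y
        with hw
      have hTw : T.mulVec w = T.mulVec v := by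
        simp [hw, mulVec_sub, mulVec_smul, hTX, hTY]
      have wX : dotProduct X w = 0 := by
        simp [hw, dotProduct_sub, hXnull, ha]
      have wY : dotProduct Y w = 0 := by
        simp [hw, dotProduct_sub, hYnull, dotProduct_comm Y X, ha]
      obtain ⟨c, hc⟩ := hX w wX
      obtain ⟨d, hd⟩ := hY w wY
      have h : dotProduct Y (c • X) = dotProduct Y (d • Y) := by rw [← hc, ← hd]
      simp [hYnull, ha'] at h
      rw [← hTw, hc, h, zero_smul]
    ext i j
    have := congrFun (key (Pi.single j 1)) i
    simpa using this
  · intro H ha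
    by_cases hd : ∃ c : ℂ, Y = c • X
    · obtain ⟨c, rfl⟩ := hd
      have hc : c ≠ 0 := by rintro rfl; simp at hY0
      obtain ⟨u, hu, hn⟩ := exists_orth N hN X
      have hm := wedge_mem_s12 N X u hXnull (by rwa [dotProduct_comm])
      refine hn (smul_of_wedge N X u hX0 (H _ hm ?_))
      obtain ⟨h1, h2, h3⟩ := hm
      refine ⟨h1, by rw [mulVec_smul, h2, smul_zero], fun w hw => ?_⟩
      obtain ⟨b, hb⟩ := h3 w (by simpa [hc] using hw)
      exact ⟨b / c, by rw [hb, smul_smul, div_mul_cancel₀ _ hc]⟩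
    · refine hd (smul_of_wedge N X Y hX0 (H _ (wedge_mem_s12 N X Y hXnull (by rwa [dotProduct_comm])) ?_))
      obtain ⟨h1, h2, h3⟩ := wedge_mem_s12 N Y X hYnull ha
      rw [← neg_sub]
      refine ⟨by rw [transpose_neg, h1], by rw [neg_mulVec, h2, neg_zero], fun w hw => ?_⟩
      obtain ⟨b, hb⟩ := h3 w hw
      exact ⟨-b, by rw [neg_mulVec, hb, neg_smul]⟩
end

section
/- Let X, Y be linearly independent null vectors in ℂ^N (with respect to the standard symmetric bilinear form) such that ⟨X,Y⟩ = 0. Then N > 3, and there exist null vectors X', Y' ∈ ℂ^N such that the Gram matrix of (X, X', Y, Y') is diag(R,R) with R = [[0,1],[1,0]]; that is, ⟨X',X'⟩ = ⟨Y',Y'⟩ = 0, ⟨X,X'⟩ = ⟨Y,Y'⟩ = 1, and ⟨X,Y'⟩ = ⟨X',Y⟩ = ⟨X',Y'⟩ = 0. -/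
open Matrix

/-- Let `X, Y` be linearly independent null vectors in `ℂ^N` with `⟨X, Y⟩ = 0` (standard
symmetric bilinear form).  Then `N > 3` and there exist null vectors `X', Y'` such that the
Gram matrix of `(X, X', Y, Y')` is `diag(R, R)` with `R = [[0,1],[1,0]]`. -/
theorem exists_hyperbolic_complement
    (N : ℕ) (X Y : Fin N → ℂ)
    (hXnull : dotProduct X X = 0) (hYnull : dotProduct Y Y = 0)
    (hind : LinearIndependent ℂ ![X, Y])
    (hXY : dotProduct X Y = 0) :
    3 < N ∧ ∃ X' Y' : Fin N → ℂ,
      dotProduct X' X' = 0 ∧ dotProduct Y' Y' = 0 ∧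
      dotProduct X X' = 1 ∧ dotProduct Y Y' = 1 ∧
      dotProduct X Y' = 0 ∧ dotProduct X' Y = 0 ∧
      dotProduct X' Y' = 0 := by
  have hinj : Function.Injective (fun v => v ᵥ* (Matrix.of ![X, Y])) :=
    Matrix.vecMul_injective_iff.2 hind
  obtain ⟨B, hB⟩ : ∃ B : Matrix (Fin N) (Fin 2) ℂ, Matrix.of ![X, Y] * B = 1 := by
    open scoped ComplexOrder in
    have hu := (Matrix.PosDef.mul_conjTranspose_self _ hinj).isUnit
    refine ⟨(Matrix.of ![X, Y])ᴴ * (Matrix.of ![X, Y] * (Matrix.of ![X, Y])ᴴ)⁻¹, ?_⟩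
    rw [← Matrix.mul_assoc]
    exact Matrix.mul_nonsing_inv _ ((Matrix.isUnit_iff_isUnit_det _).1 hu)
  have e : ∀ i j, dotProduct (![X, Y] i) (fun k => B k j) = (1 : Matrix (Fin 2) (Fin 2) ℂ) i j := by
    intro i j
    rw [← hB]; rfl
  obtain ⟨u, hXu, hYu⟩ : ∃ u, dotProduct X u = 1 ∧ dotProduct Y u = 0 :=
    ⟨fun k => B k 0, by simpa using e 0 0, by simpa using e 1 0⟩
  obtain ⟨v, hXv, hYv⟩ : ∃ u, dotProduct X u = 0 ∧ dotProduct Y u = 1 :=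
    ⟨fun k => B k 1, by simpa using e 0 1, by simpa using e 1 1⟩
  have hYX : dotProduct Y X = 0 := by rw [dotProduct_comm]; exact hXY
  obtain ⟨X', h1, h2, h3⟩ : ∃ X', dotProduct X' X' = 0 ∧ dotProduct X X' = 1 ∧
      dotProduct Y X' = 0 := by
    refine ⟨u - (dotProduct u u / 2) • X, ?_, ?_, ?_⟩ <;>
      simp [dotProduct_comm u X, *]
    ring
  obtain ⟨Y', h4, h5, h6, h7⟩ : ∃ Y', dotProduct Y' Y' = 0 ∧ dotProduct Y Y' = 1 ∧
      dotProduct X Y' = 0 ∧ dotProduct X' Y' = 0 := by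
    refine ⟨v - (dotProduct v v / 2) • Y - (dotProduct X' v) • X, ?_, ?_, ?_, ?_⟩ <;>
      simp [dotProduct_comm v X, dotProduct_comm v Y, dotProduct_comm X' X,
        dotProduct_comm X' Y, *]
    ring
  have h3' : dotProduct X' Y = 0 := by rw [dotProduct_comm]; exact h3
  refine ⟨?_, X', Y', h1, h4, h2, h5, h6, h3', h7⟩
  have hli : LinearIndependent ℂ ![X, X', Y, Y'] := by
    rw [Fintype.linearIndependent_iff]
    intro g hg
    simp only [Fin.sum_univ_four] at hg
    have k1 := congrArg (dotProduct X) hg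
    have k2 := congrArg (dotProduct X') hg
    have k3 := congrArg (dotProduct Y) hg
    have k4 := congrArg (dotProduct Y') hg
    simp [*] at k1
    simp [dotProduct_comm X' X, *] at k2
    simp [*] at k3
    simp [dotProduct_comm Y' X, dotProduct_comm Y' X', dotProduct_comm Y' Y, *] at k4
    intro i
    fin_cases i <;> simp [*]
  have := hli.fintype_card_le_finrank
  simp at this
  omega
end
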